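/- arXiv:0909.1693 — 5 statements merged into one kernel-verified Lean document; each statement's English description precedes it below -/
import Mathlib

section
/- Let t₁, …, t₇ be seven distinct complex numbers and let Q be a quadric vanishing at the seven points ν(tᵢ) = (1, tᵢ, tᵢ², tᵢ³). Then Q(1, t, t², t³) = 0 for all t ∈ ℂ, i.e. Q vanishes on the whole rational normal cubic. Consequently, for any d ≥ 8, any set of d distinct points ν(t₁), …, ν(t_d) on the rational normal cubic satisfies the Cayley–Bacharach property for quadrics. -/
open MvPolynomial
open scoped Classical

/-- The affine point of the rational normal cubic at parameter `t`: `(1, t, t², t³) ∈ ℂ⁴`. -/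
noncomputable def rnc (t : ℂ) : Fin 4 → ℂ := fun i => t ^ (i : ℕ)

theorem rnc_ne_zero (t : ℂ) : rnc t ≠ 0 := by
  intro h
  have h0 := congrFun h 0
  simp [rnc] at h0

/-- A finite set `P` of points of `ℙ³(ℂ)` satisfies the Cayley–Bacharach property for quadrics
if it is nonempty and, for every `p ∈ P`, every quadric (homogeneous polynomial of degree `2`
in `ℂ[X₀,X₁,X₂,X₃]`) vanishing at all points of `P \ {p}` also vanishes at `p`. -/
def CayleyBacharach (P : Finset (Projectivization ℂ (Fin 4 → ℂ))) : Prop :=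
  P.Nonempty ∧
    ∀ p ∈ P, ∀ Q : MvPolynomial (Fin 4) ℂ, Q.IsHomogeneous 2 →
      (∀ q ∈ P.erase p, eval (Projectivization.rep q) Q = 0) →
      eval (Projectivization.rep p) Q = 0

theorem aux_deg {Q : MvPolynomial (Fin 4) ℂ} (hQ : Q.IsHomogeneous 2) {m : Fin 4 →₀ ℕ}
    (hm : m ∈ Q.support) : ∑ i, m i = 2 := by
  have h := hQ (mem_support_iff.mp hm)
  rw [← h, Finsupp.weight_apply, Finsupp.sum_fintype] <;> simp

theorem aux_smul {Q : MvPolynomial (Fin 4) ℂ} (hQ : Q.IsHomogeneous 2) (a : ℂ)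
    (v : Fin 4 → ℂ) : eval (a • v) Q = a ^ 2 * eval v Q := by
  rw [eval_eq', eval_eq', Finset.mul_sum]
  refine Finset.sum_congr rfl fun m hm => ?_
  simp only [Pi.smul_apply, smul_eq_mul, mul_pow, Finset.prod_mul_distrib]
  rw [Finset.prod_pow_eq_pow_sum, aux_deg hQ hm]
  ring

theorem aux_seven (t : Fin 7 → ℂ) (ht : Function.Injective t)
    (Q : MvPolynomial (Fin 4) ℂ) (hQ : Q.IsHomogeneous 2)
    (h : ∀ i, eval (rnc (t i)) Q = 0) (s : ℂ) : eval (rnc s) Q = 0 := by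
  let p : Polynomial ℂ := ∑ m ∈ Q.support,
    Polynomial.C (coeff m Q) * Polynomial.X ^ (∑ i : Fin 4, (i : ℕ) * m i)
  have hp : ∀ x, p.eval x = eval (rnc x) Q := by
    intro x
    rw [eval_eq', Polynomial.eval_finsetSum]
    refine Finset.sum_congr rfl fun m _ => ?_
    simp only [rnc, ← pow_mul, Finset.prod_pow_eq_pow_sum]
    simp
  have hd : p.natDegree ≤ 6 := by
    refine Polynomial.natDegree_sum_le_of_forall_le _ _ fun m hm => ?_
    refine (Polynomial.natDegree_C_mul_X_pow_le _ _).trans ?_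
    have := aux_deg hQ hm
    simp [Fin.sum_univ_four] at this ⊢
    omega
  have h0 : p = 0 := Polynomial.eq_zero_of_natDegree_lt_card_of_eval_eq_zero p ht
    (fun i => by rw [hp, h]) (by simp; omega)
  rw [← hp, h0, Polynomial.eval_zero]

theorem aux_rep {Q : MvPolynomial (Fin 4) ℂ} (hQ : Q.IsHomogeneous 2) (x : ℂ) :
    eval (Projectivization.mk ℂ (rnc x) (rnc_ne_zero x)).rep Q = 0 ↔ eval (rnc x) Q = 0 := by
  obtain ⟨a, ha⟩ := Projectivization.exists_smul_eq_mk_rep ℂ (rnc x) (rnc_ne_zero x)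
  rw [← ha, Units.smul_def, aux_smul hQ]
  simp

theorem aux_inj {x y : ℂ} (h : Projectivization.mk ℂ (rnc x) (rnc_ne_zero x) =
    Projectivization.mk ℂ (rnc y) (rnc_ne_zero y)) : x = y := by
  rw [Projectivization.mk_eq_mk_iff'] at h
  obtain ⟨a, ha⟩ := h
  have h0 := congrFun ha 0
  have h1 := congrFun ha 1
  simp [rnc] at h0 h1
  rw [← h1, h0, one_mul]

/-- A quadric vanishing at seven distinct points of the rational normal cubic
vanishes on the whole curve; consequently, for `d ≥ 8`, any `d` distinct points on the
rational normal cubic satisfy the Cayley–Bacharach property for quadrics. -/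
theorem stmt_4 :
    (∀ t : Fin 7 → ℂ, Function.Injective t →
      ∀ Q : MvPolynomial (Fin 4) ℂ, Q.IsHomogeneous 2 →
        (∀ i, eval (rnc (t i)) Q = 0) → ∀ s : ℂ, eval (rnc s) Q = 0)
    ∧ ∀ d : ℕ, 8 ≤ d → ∀ t : Fin d → ℂ, Function.Injective t →
        CayleyBacharach
          (Finset.image (fun i => Projectivization.mk ℂ (rnc (t i)) (rnc_ne_zero (t i)))
            Finset.univ) := by
  refine ⟨aux_seven, fun d hd t ht => ⟨?_, ?_⟩⟩
  · exact ⟨_, Finset.mem_image_of_mem _ (Finset.mem_univ ⟨0, by omega⟩)⟩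
  · intro p hp Q hQ h
    obtain ⟨i, -, rfl⟩ := Finset.mem_image.mp hp
    obtain ⟨n, rfl⟩ : ∃ n, d = n + 1 := ⟨d - 1, by omega⟩
    have hn : 7 ≤ n := by omega
    refine (aux_rep hQ _).mpr (aux_seven (fun k => t (i.succAbove (Fin.castLE hn k)))
      (fun a b hab => ?_) Q hQ (fun k => ?_) _)
    · exact Fin.castLE_injective hn (Fin.succAbove_right_injective (ht hab))
    · refine (aux_rep hQ _).mp (h _ (Finset.mem_erase.mpr ⟨fun he => ?_, ?_⟩))
      · exact Fin.succAbove_ne i _ (ht (aux_inj he))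
      · exact Finset.mem_image.mpr ⟨_, Finset.mem_univ _, rfl⟩
end

section
/- Every finite set of distinct points of ℙ³(ℂ) satisfying the Cayley–Bacharach property for quadrics has at least 4 points. -/
open MvPolynomial
open scoped Classical

lemma lin_nonzero (p : Projectivization ℂ (Fin 4 → ℂ)) :
    ∃ L : MvPolynomial (Fin 4) ℂ, L.IsHomogeneous 1 ∧ eval p.rep L ≠ 0 := by
  obtain ⟨i, hi⟩ := Function.ne_iff.mp p.rep_nonzero
  exact ⟨X i, isHomogeneous_X _ _, by simpa using hi⟩

lemma lin_sep (p q : Projectivization ℂ (Fin 4 → ℂ)) (hpq : q ≠ p) :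
    ∃ L : MvPolynomial (Fin 4) ℂ, L.IsHomogeneous 1 ∧ eval q.rep L = 0 ∧ eval p.rep L ≠ 0 := by
  by_contra hcon
  push Not at hcon
  have key : ∀ i j, q.rep j * p.rep i - q.rep i * p.rep j = 0 := by
    intro i j
    have := hcon (C (q.rep j) * X i - C (q.rep i) * X j)
      (((isHomogeneous_X ℂ i).C_mul _).sub ((isHomogeneous_X ℂ j).C_mul _))
      (by simp; ring)
    simpa using this
  obtain ⟨j, hj⟩ := Function.ne_iff.mp p.rep_nonzero
  have hj' : p.rep j ≠ 0 := hj
  apply hpq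
  rw [← q.mk_rep, ← p.mk_rep, Projectivization.mk_eq_mk_iff']
  refine ⟨q.rep j / p.rep j, ?_⟩
  ext i
  simp only [Pi.smul_apply, smul_eq_mul]
  field_simp
  linear_combination key i j

/-- Every finite set of distinct points of `ℙ³(ℂ)` satisfying the
Cayley–Bacharach property for quadrics has at least `4` points. -/
theorem stmt_14 (P : Finset (Projectivization ℂ (Fin 4 → ℂ))) (h : CayleyBacharach P) :
    4 ≤ P.card := by
  by_contra hlt
  obtain ⟨⟨p, hp⟩, h⟩ := h
  have hc := Finset.card_erase_of_mem hp
  have hne : ∀ q ∈ P.erase p, q ≠ p := fun q hq => Finset.ne_of_mem_erase hq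
  have main : ∀ L M : MvPolynomial (Fin 4) ℂ, L.IsHomogeneous 1 → M.IsHomogeneous 1 →
      eval p.rep L ≠ 0 → eval p.rep M ≠ 0 →
      (∀ q ∈ P.erase p, eval q.rep L = 0 ∨ eval q.rep M = 0) → False := by
    intro L M hL hM hLp hMp hq
    have := h p hp (L * M) (hL.mul hM) (fun q hqq => by simpa using hq q hqq)
    rw [map_mul] at this
    exact (mul_ne_zero hLp hMp) this
  have h3 : (P.erase p).card = 0 ∨ (P.erase p).card = 1 ∨ (P.erase p).card = 2 := by omega
  rcases h3 with h0 | h1 | h2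
  · obtain ⟨L, hL, hLp⟩ := lin_nonzero p
    rw [Finset.card_eq_zero] at h0
    exact main L L hL hL hLp hLp (by simp [h0])
  · obtain ⟨a, ha⟩ := Finset.card_eq_one.mp h1
    obtain ⟨L, hL, hLa, hLp⟩ := lin_sep p a (hne a (by simp [ha]))
    exact main L L hL hL hLp hLp (by simp [ha, hLa])
  · obtain ⟨a, b, -, ha⟩ := Finset.card_eq_two.mp h2
    obtain ⟨L, hL, hLa, hLp⟩ := lin_sep p a (hne a (by simp [ha]))
    obtain ⟨M, hM, hMa, hMp⟩ := lin_sep p b (hne b (by simp [ha]))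
    exact main L M hL hM hLp hMp (by simp [ha, hLa, hMa])
end

section
/- Let P be a finite set of distinct points of ℙ³(ℂ) satisfying the Cayley–Bacharach property for quadrics, and let W ⊂ ℙ³(ℂ) be the projectivization of a proper linear subspace of ℂ⁴ (a point, a line, or a plane). Then the number of points of P not lying in W is never exactly 1. -/
open MvPolynomial
open scoped Classical

/-- Let `P` be a finite set of distinct points of `ℙ³(ℂ)` satisfying the
Cayley–Bacharach property for quadrics, and let `W` be the projectivization of a proper linear
subspace of `ℂ⁴` (a point, a line, or a plane).  Then the number of points of `P` not lying in
`W` is never exactly `1`. -/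
theorem stmt_15 (P : Finset (Projectivization ℂ (Fin 4 → ℂ))) (h : CayleyBacharach P)
    (W : Submodule ℂ (Fin 4 → ℂ)) (hW : W ≠ ⊤) :
    (P.filter fun p => Projectivization.rep p ∉ W).card ≠ 1 := by
  intro hc
  obtain ⟨p, hp⟩ := Finset.card_eq_one.mp hc
  have hpm : p ∈ P.filter fun p => Projectivization.rep p ∉ W := by
    rw [hp]; exact Finset.mem_singleton_self p
  obtain ⟨hpP, hpW⟩ := Finset.mem_filter.mp hpm
  obtain ⟨f, hfp, hfW⟩ := Submodule.exists_le_ker_of_notMem hpW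
  have hev : ∀ x : Fin 4 → ℂ,
      eval x ((∑ i, C (f (Pi.single i 1)) * X i : MvPolynomial (Fin 4) ℂ) ^ 2) = f x ^ 2 := by
    intro x
    have hx : f x = ∑ i, f (Pi.single i 1) * x i := by
      conv_lhs => rw [pi_eq_sum_univ' x]
      rw [map_sum]
      refine Finset.sum_congr rfl fun i _ => ?_
      rw [map_smul, smul_eq_mul, mul_comm]
    rw [hx]
    simp
  have hhom : ((∑ i, C (f (Pi.single i 1)) * X i : MvPolynomial (Fin 4) ℂ) ^ 2).IsHomogeneous 2 := by
    have h1 : (∑ i, C (f (Pi.single i 1)) * X i : MvPolynomial (Fin 4) ℂ).IsHomogeneous 1 := by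
      refine IsHomogeneous.sum _ _ _ fun i _ => ?_
      simpa using (isHomogeneous_C (Fin 4) (f (Pi.single i 1))).mul (isHomogeneous_X ℂ i)
    simpa using h1.pow 2
  have key := h.2 p hpP _ hhom (by
    intro q hq
    obtain ⟨hne, hqP⟩ := Finset.mem_erase.mp hq
    have hqW : Projectivization.rep q ∈ W := by
      by_contra hn
      have : q ∈ P.filter fun p => Projectivization.rep p ∉ W :=
        Finset.mem_filter.mpr ⟨hqP, hn⟩
      rw [hp] at this
      exact hne (Finset.mem_singleton.mp this)
    have h0 : f (Projectivization.rep q) = 0 := hfW hqW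
    rw [hev, h0]; simp)
  rw [hev] at key
  exact hfp (pow_eq_zero_iff (two_ne_zero) |>.mp key)
end

section
/- Every set of exactly 4 or exactly 5 distinct points of ℙ³(ℂ) satisfying the Cayley–Bacharach property for quadrics is contained in a line (the projectivization of a 2-dimensional linear subspace of ℂ⁴). -/
open MvPolynomial
open scoped Classical

def Col16 (x y z : Projectivization ℂ (Fin 4 → ℂ)) : Prop :=
  z.rep ∈ Submodule.span ℂ {x.rep, y.rep}

lemma col16_swap {x y z : Projectivization ℂ (Fin 4 → ℂ)} (h : Col16 x y z) : Col16 y x z := by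
  unfold Col16 at *
  rwa [Set.pair_comm]

lemma not_mem16 {x z : Projectivization ℂ (Fin 4 → ℂ)} (hxz : x ≠ z) :
    z.rep ∉ Submodule.span ℂ {x.rep} := by
  intro h
  obtain ⟨a, ha⟩ := Submodule.mem_span_singleton.1 h
  apply hxz
  rw [← x.mk_rep, ← z.mk_rep]
  exact ((Projectivization.mk_eq_mk_iff' ℂ _ _ z.rep_nonzero x.rep_nonzero).2 ⟨a, ha⟩).symm

lemma col16_rot {x y z : Projectivization ℂ (Fin 4 → ℂ)} (hxz : x ≠ z) (h : Col16 x y z) :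
    Col16 x z y := by
  apply col16_swap
  have h' := col16_swap h
  exact mem_span_insert_exchange h' (not_mem16 hxz)

lemma col16_trans {x y z w : Projectivization ℂ (Fin 4 → ℂ)} (hxz : x ≠ z) (h : Col16 x y z)
    (h2 : Col16 x y w) : Col16 x z w := by
  have h3 := col16_rot hxz h
  unfold Col16 at *
  refine Submodule.span_le.2 ?_ h2
  rintro v (rfl | rfl)
  · exact Submodule.subset_span (by simp)
  · exact h3

lemma form16 (W : Submodule ℂ (Fin 4 → ℂ)) (v : Fin 4 → ℂ) (hv : v ∉ W) :
    ∃ l : MvPolynomial (Fin 4) ℂ, l.IsHomogeneous 1 ∧ eval v l ≠ 0 ∧ ∀ w ∈ W, eval w l = 0 := by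
  obtain ⟨f, hf, hW⟩ := Submodule.exists_le_ker_of_notMem hv
  have key : ∀ w, eval w (∑ i, C (f (Pi.single i 1)) * X i : MvPolynomial (Fin 4) ℂ) = f w := by
    intro w
    conv_rhs => rw [LinearMap.pi_apply_eq_sum_univ f w]
    simp only [map_sum, map_mul, eval_C, eval_X, smul_eq_mul]
    refine Finset.sum_congr rfl fun i _ => ?_
    rw [mul_comm]
    congr 2
    ext j
    simp [Pi.single_apply, eq_comm]
  refine ⟨∑ i, C (f (Pi.single i 1)) * X i, ?_, ?_, ?_⟩
  · refine IsHomogeneous.sum _ _ _ fun i _ => ?_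
    simpa using (isHomogeneous_C (Fin 4) (f (Pi.single i 1))).mul (isHomogeneous_X ℂ i)
  · rw [key]; exact hf
  · intro w hw
    rw [key]; exact hW hw

lemma cb16 {P : Finset (Projectivization ℂ (Fin 4 → ℂ))} (h : CayleyBacharach P)
    {p : Projectivization ℂ (Fin 4 → ℂ)} (hp : p ∈ P) (a b c d : Projectivization ℂ (Fin 4 → ℂ))
    (hP : ∀ q ∈ P, q = p ∨ q = a ∨ q = b ∨ q = c ∨ q = d) : Col16 a b p ∨ Col16 c d p := by
  by_contra! hh
  obtain ⟨l, l1, l2, l3⟩ := form16 _ _ hh.1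
  obtain ⟨m, m1, m2, m3⟩ := form16 _ _ hh.2
  have := h.2 p hp (l * m) (l1.mul m1) (by
    intro q hq
    obtain ⟨q1, q2⟩ := Finset.mem_erase.1 hq
    rw [map_mul]
    rcases hP q q2 with rfl | rfl | rfl | rfl | rfl
    · exact absurd rfl q1
    · rw [l3 _ (Submodule.subset_span (by simp)), zero_mul]
    · rw [l3 _ (Submodule.subset_span (by simp)), zero_mul]
    · rw [m3 _ (Submodule.subset_span (by simp)), mul_zero]
    · rw [m3 _ (Submodule.subset_span (by simp)), mul_zero])
  rw [map_mul] at this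
  exact (mul_ne_zero l2 m2) this

lemma fin16 {p a : Projectivization ℂ (Fin 4 → ℂ)} (h : p ≠ a) :
    Module.finrank ℂ (Submodule.span ℂ {p.rep, a.rep}) = 2 := by
  have : LinearIndependent ℂ ![p.rep, a.rep] := by
    rw [LinearIndependent.pair_iff' p.rep_nonzero]
    intro c hc
    exact not_mem16 h (Submodule.mem_span_singleton.2 ⟨c, hc⟩)
  have h2 := finrank_span_eq_card this
  rw [Matrix.range_cons_cons_empty] at h2
  simpa using h2

theorem stmt_16 (P : Finset (Projectivization ℂ (Fin 4 → ℂ))) (h : CayleyBacharach P)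
    (hcard : P.card = 4 ∨ P.card = 5) :
    ∃ W : Submodule ℂ (Fin 4 → ℂ), Module.finrank ℂ W = 2 ∧
      ∀ p ∈ P, Projectivization.rep p ∈ W := by
  have self1 : ∀ x y, Col16 x y x := fun x y => Submodule.subset_span (by simp)
  have self2 : ∀ x y, Col16 x y y := fun x y => Submodule.subset_span (by simp)
  have hs : ∀ x y z, Col16 x y z → Col16 y x z := fun _ _ _ => col16_swap
  have hr : ∀ x y z, x ≠ z → Col16 x y z → Col16 x z y := fun _ _ _ => col16_rot
  have ht : ∀ x y z w, x ≠ z → Col16 x y z → Col16 x y w → Col16 x z w :=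
    fun _ _ _ _ => col16_trans
  have hn : ∀ x z, x ≠ z → ¬ Col16 x x z := by
    intro x z hxz h
    exact not_mem16 hxz (by simpa [Col16] using h)
  rcases hcard with hc | hc
  · obtain ⟨p, a, b, c, hpa, hpb, hpc, hab, hac, hbc, rfl⟩ := Finset.card_eq_four.1 hc
    refine ⟨_, fin16 hpa, ?_⟩
    have h1 := (cb16 h (p := p) (by simp) a b c c (by simp)).resolve_right (hn _ _ hpc.symm)
    have h2 := (cb16 h (p := p) (by simp) a c b b (by simp)).resolve_right (hn _ _ hpb.symm)
    have h3 : Col16 p a b := hs _ _ _ (hr _ _ _ hpa.symm h1)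
    have h4 : Col16 p a c := hs _ _ _ (hr _ _ _ hpa.symm h2)
    intro q hq
    simp only [Finset.mem_insert, Finset.mem_singleton] at hq
    rcases hq with rfl | rfl | rfl | rfl
    exacts [self1 _ _, self2 _ _, h3, h4]
  · obtain ⟨p, P', hp, rfl, hc'⟩ := Finset.card_eq_succ.1 hc
    obtain ⟨a, b, c, d, hab, hac, had, hbc, hbd, hcd, rfl⟩ := Finset.card_eq_four.1 hc'
    simp only [Finset.mem_insert, Finset.mem_singleton, not_or] at hp
    obtain ⟨hpa, hpb, hpc, hpd⟩ := hp
    have p1 := cb16 h (p := p) (by simp) a b c d (by simp)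
    have p2 := cb16 h (p := p) (by simp) a c b d (by simp)
    have p3 := cb16 h (p := p) (by simp) a d b c (by simp)
    have a1 := cb16 h (p := a) (by simp) p b c d (by simp)
    have b1 := cb16 h (p := b) (by simp) p a c d (by simp)
    have c1 := cb16 h (p := c) (by simp) p a b d (by simp)
    have d1 := cb16 h (p := d) (by simp) p a b c (by simp)
    have key : Col16 p a b ∧ Col16 p a c ∧ Col16 p a d := by
      clear h hc hc'
      grind
    refine ⟨_, fin16 hpa, ?_⟩
    intro q hq
    simp only [Finset.mem_insert, Finset.mem_singleton] at hq
    rcases hq with rfl | rfl | rfl | rfl | rfl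
    exacts [self1 _ _, self2 _ _, key.1, key.2.1, key.2.2]
end

section
/- Every set of exactly 6 or exactly 7 distinct points of ℙ³(ℂ) satisfying the Cayley–Bacharach property for quadrics is contained in a plane (the projectivization of a 3-dimensional linear subspace of ℂ⁴). -/
open MvPolynomial
open scoped Classical

noncomputable def linPoly (f : (Fin 4 → ℂ) →ₗ[ℂ] ℂ) : MvPolynomial (Fin 4) ℂ :=
  ∑ i, C (f (Pi.single i 1)) * X i

lemma linPoly_hom (f : (Fin 4 → ℂ) →ₗ[ℂ] ℂ) : (linPoly f).IsHomogeneous 1 := by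
  unfold linPoly
  apply IsHomogeneous.sum
  intro i _
  simpa using (isHomogeneous_C (Fin 4) (f (Pi.single i 1))).mul (isHomogeneous_X ℂ i)

lemma linPoly_eval (f : (Fin 4 → ℂ) →ₗ[ℂ] ℂ) (v : Fin 4 → ℂ) : eval v (linPoly f) = f v := by
  rw [LinearMap.pi_apply_eq_sum_univ f v]
  unfold linPoly
  simp only [map_sum, map_mul, eval_C, eval_X, smul_eq_mul]
  refine Finset.sum_congr rfl fun i _ => ?_
  rw [mul_comm]
  congr 2
  ext j
  simp [Pi.single_apply, eq_comm]

abbrev PP := Projectivization ℂ (Fin 4 → ℂ)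

/-- span of representatives -/
noncomputable def sp (T : Finset PP) : Submodule ℂ (Fin 4 → ℂ) :=
  Submodule.span ℂ (↑(T.image Projectivization.rep) : Set (Fin 4 → ℂ))

lemma mem_sp {T : Finset PP} {p : PP} (hp : p ∈ T) : p.rep ∈ sp T :=
  Submodule.subset_span (by simpa using ⟨p, hp, rfl⟩)

lemma resid {P : Finset PP} (h : CayleyBacharach P) (f : (Fin 4 → ℂ) →ₗ[ℂ] ℂ)
    {p : PP} (hp : p ∈ P) (hf : f p.rep ≠ 0) :
    p.rep ∈ sp ((P.filter (fun q => f q.rep ≠ 0)).erase p) := by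
  by_contra hn
  obtain ⟨g, hg, hle⟩ := Submodule.exists_le_ker_of_notMem hn
  have := h.2 p hp (linPoly f * linPoly g) ((linPoly_hom f).mul (linPoly_hom g)) (by
    intro q hq
    rw [map_mul, linPoly_eval, linPoly_eval]
    by_cases hfq : f q.rep = 0
    · simp [hfq]
    · have : q.rep ∈ sp ((P.filter (fun q => f q.rep ≠ 0)).erase p) := by
        apply mem_sp
        simp only [Finset.mem_erase, Finset.mem_filter] at hq ⊢
        exact ⟨hq.1, hq.2, hfq⟩
      have := hle this
      rw [LinearMap.mem_ker] at this
      simp [this])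
  rw [map_mul, linPoly_eval, linPoly_eval] at this
  exact (mul_ne_zero hf hg) this

lemma plane (T : Finset PP) (hT : T.card ≤ 3) :
    ∃ f : (Fin 4 → ℂ) →ₗ[ℂ] ℂ, f ≠ 0 ∧ ∀ v ∈ sp T, f v = 0 := by
  have h1 : Module.finrank ℂ (sp T) ≤ 3 :=
    (finrank_span_finset_le_card _).trans (Finset.card_image_le.trans hT)
  have h2 : sp T < ⊤ := by
    rw [lt_top_iff_ne_top]
    intro h
    rw [h, finrank_top] at h1
    simp at h1
  obtain ⟨f, hf, hle⟩ := Submodule.exists_le_ker_of_lt_top _ h2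
  exact ⟨f, hf, fun v hv => hle hv⟩

lemma not_mem_small {T : Finset PP} {p : PP} (hp : p ∉ T) (hT : T.card ≤ 1) :
    p.rep ∉ sp T := by
  intro h
  rcases Nat.le_one_iff_eq_zero_or_eq_one.1 hT with h0 | h1
  · rw [Finset.card_eq_zero] at h0
    subst h0
    simp [sp] at h
    exact p.rep_nonzero h
  · obtain ⟨q, rfl⟩ := Finset.card_eq_one.1 h1
    simp only [sp, Finset.image_singleton, Finset.coe_singleton] at h
    obtain ⟨c, hc⟩ := Submodule.mem_span_singleton.1 h
    apply hp
    rw [Finset.mem_singleton, ← p.mk_rep, ← q.mk_rep]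
    rw [Projectivization.mk_eq_mk_iff']
    exact ⟨c, hc⟩

lemma sp_mono {S T : Finset PP} (h : S ⊆ T) : sp S ≤ sp T :=
  Submodule.span_mono (by exact_mod_cast Finset.image_subset_image h)

/-- **Statement 16.** Every set of exactly `6` or exactly `7` distinct points of `ℙ³(ℂ)`
satisfying the Cayley–Bacharach property for quadrics is contained in a plane, i.e. the
projectivization of a `3`-dimensional linear subspace of `ℂ⁴`. -/
theorem stmt_17 (P : Finset (Projectivization ℂ (Fin 4 → ℂ))) (h : CayleyBacharach P)
    (hcard : P.card = 6 ∨ P.card = 7) :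
    ∃ W : Submodule ℂ (Fin 4 → ℂ), Module.finrank ℂ W = 3 ∧
      ∀ p ∈ P, Projectivization.rep p ∈ W := by
  by_contra hcon
  have hnp : ∀ f : (Fin 4 → ℂ) →ₗ[ℂ] ℂ, f ≠ 0 → ∃ p ∈ P, f p.rep ≠ 0 := by
    intro f hf
    by_contra hall
    push Not at hall
    refine hcon ⟨LinearMap.ker f, ?_, hall⟩
    have := Module.Dual.finrank_ker_add_one_of_ne_zero (f := f) hf
    simp at this
    omega
  -- number of points on a plane
  let n : ((Fin 4 → ℂ) →ₗ[ℂ] ℂ) → ℕ := fun f => (P.filter (fun q => f q.rep = 0)).card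
  have hn : ∀ f, n f ≤ P.card := fun f => Finset.card_filter_le _ _
  have hbd : ∃ m, (∃ f, f ≠ 0 ∧ n f = m) ∧ ∀ f, f ≠ 0 → n f ≤ m := by
    have hex : ∃ m, ∃ f, f ≠ 0 ∧ n f = m := by
      obtain ⟨f, hf, _⟩ := plane ∅ (by simp)
      exact ⟨_, f, hf, rfl⟩
    obtain ⟨m0, hm0⟩ := hex
    have hm0' : m0 ≤ P.card := by
      obtain ⟨f, _, rfl⟩ := hm0
      exact hn f
    refine ⟨_, Nat.findGreatest_spec (P := fun m => ∃ f, f ≠ 0 ∧ n f = m) hm0' hm0, ?_⟩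
    intro f hf
    exact Nat.le_findGreatest (hn f) ⟨f, hf, rfl⟩
  obtain ⟨m, ⟨f, hf, hfm⟩, hmax⟩ := hbd
  -- coplanar subsets are small
  have hcop : ∀ S T : Finset PP, S ⊆ P → T.card ≤ 3 → (∀ p ∈ S, p.rep ∈ sp T) →
      S.card ≤ m := by
    intro S T hSP hT hST
    obtain ⟨g, hg, hg0⟩ := plane T hT
    refine le_trans (Finset.card_le_card ?_) (hmax g hg)
    intro p hp
    exact Finset.mem_filter.2 ⟨hSP hp, hg0 _ (hST p hp)⟩
  have hcompl : ∀ g : (Fin 4 → ℂ) →ₗ[ℂ] ℂ,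
      n g + (P.filter (fun q => g q.rep ≠ 0)).card = P.card := fun g =>
    Finset.card_filter_add_card_filter_not (s := P) (fun q : PP => g q.rep = 0)
  have hm3 : 3 ≤ m := by
    obtain ⟨S, hS, hSc⟩ := Finset.exists_subset_card_eq (s := P) (n := 3) (by omega)
    have := hcop S S hS hSc.le (fun p hp => mem_sp hp)
    omega
  set R := P.filter (fun q => f q.rep ≠ 0) with hR
  have hRsub : R ⊆ P := Finset.filter_subset _ _
  have hRc := hcompl f
  rw [hfm, ← hR] at hRc
  obtain ⟨a, haP, hfa⟩ := hnp f hf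
  have haR : a ∈ R := Finset.mem_filter.2 ⟨haP, hfa⟩
  have hspR : ∀ p ∈ R, p.rep ∈ sp (R.erase a) := by
    intro p hp
    by_cases hpa : p = a
    · subst hpa
      exact resid h f haP hfa
    · exact mem_sp (Finset.mem_erase.2 ⟨hpa, hp⟩)
  have hca := Finset.card_erase_of_mem haR
  have hRm : R.card ≤ m := hcop R (R.erase a) hRsub (by omega) hspR
  have hR3 : 3 ≤ R.card := by
    by_contra hlt
    exact not_mem_small (Finset.notMem_erase a R) (by omega) (hspR a haR)
  have hR3' : R.card = 3 := by omega
  -- planes through the line spanned by `R` and another point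
  have hins : ∀ d ∈ P, d ∉ R → ∀ p ∈ insert d R, p.rep ∈ sp (insert d (R.erase a)) := by
    intro d _ _ p hp
    rcases Finset.mem_insert.1 hp with rfl | hp
    · exact mem_sp (Finset.mem_insert_self _ _)
    · exact sp_mono (Finset.subset_insert _ _) (hspR p hp)
  have hcins : ∀ d, (insert d (R.erase a)).card ≤ 3 := fun d =>
    (Finset.card_insert_le _ _).trans (by omega)
  set Z := P \ R with hZ
  have hZc : Z.card + R.card = P.card := Finset.card_sdiff_add_card_eq_card hRsub
  have hZmem : ∀ d ∈ Z, d ∈ P ∧ d ∉ R := fun d hd => Finset.mem_sdiff.1 hd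
  have hm4 : 4 ≤ m := by
    obtain ⟨d, hd⟩ := Finset.card_pos.1 (show 0 < Z.card by omega)
    obtain ⟨hdP, hdR⟩ := hZmem d hd
    have := hcop (insert d R) _ (Finset.insert_subset hdP hRsub) (hcins d) (hins d hdP hdR)
    rw [Finset.card_insert_of_notMem hdR] at this
    omega
  have hm : m = 4 := by omega
  have hZ4 : Z.card = 4 := by omega
  have key : ∀ d ∈ Z, ∀ x ∈ Z, x ≠ d → x.rep ∈ sp ((Z.erase d).erase x) := by
    intro d hd x hx hxd
    obtain ⟨hdP, hdR⟩ := hZmem d hd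
    obtain ⟨g, hg, hg0⟩ := plane _ (hcins d)
    have hsub : insert d R ⊆ P.filter (fun q => g q.rep = 0) := fun p hp =>
      Finset.mem_filter.2 ⟨Finset.insert_subset hdP hRsub hp, hg0 _ (hins d hdP hdR p hp)⟩
    have heq : insert d R = P.filter (fun q => g q.rep = 0) := by
      apply Finset.eq_of_subset_of_card_le hsub
      rw [Finset.card_insert_of_notMem hdR]
      have := hmax g hg
      simp only [n] at this
      omega
    have heq2 : P.filter (fun q => g q.rep ≠ 0) = Z.erase d := by
      ext p
      have := congrArg (fun s => p ∈ s) heq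
      simp only [Finset.mem_insert, Finset.mem_filter, eq_iff_iff] at this
      simp only [Finset.mem_filter, Finset.mem_erase, hZ, Finset.mem_sdiff]
      tauto
    have hxm : x ∈ P.filter (fun q => g q.rep ≠ 0) := by
      rw [heq2]; exact Finset.mem_erase.2 ⟨hxd, hx⟩
    have := resid h g (hZmem x hx).1 (Finset.mem_filter.1 hxm).2
    rwa [heq2] at this
  obtain ⟨d, hd⟩ := Finset.card_pos.1 (show 0 < Z.card by omega)
  have hc1 := Finset.card_erase_of_mem hd
  obtain ⟨e, he⟩ := Finset.card_pos.1 (show 0 < (Z.erase d).card by omega)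
  have hc2 := Finset.card_erase_of_mem he
  obtain ⟨hed, heZ⟩ := Finset.mem_erase.1 he
  have k1 := key d hd e heZ hed
  have k2 := key e heZ d hd hed.symm
  rw [Finset.erase_right_comm] at k2
  have haZ : a ∉ Z := fun ha => (hZmem a ha).2 haR
  have := hcop (insert a Z) (insert a ((Z.erase d).erase e))
    (Finset.insert_subset haP Finset.sdiff_subset)
    ((Finset.card_insert_le _ _).trans (by omega)) (by
      intro p hp
      rcases Finset.mem_insert.1 hp with rfl | hp
      · exact mem_sp (Finset.mem_insert_self _ _)
      · apply sp_mono (Finset.subset_insert _ _)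
        by_cases h1 : p = d
        · rw [h1]; exact k2
        by_cases h2 : p = e
        · rw [h2]; exact k1
        exact mem_sp (Finset.mem_erase.2 ⟨h2, Finset.mem_erase.2 ⟨h1, hp⟩⟩))
  rw [Finset.card_insert_of_notMem haZ] at this
  omega
end
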